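/- Let Φ, Ĝ, Ḡ be symmetric n×n real matrices such that Φ is positive definite, Ĝ is positive definite, Ĝ − Φ is positive definite, and Ḡ + Ĝ⁻¹ is positive semidefinite. Then Ḡ + (Ĝ − Φ)⁻¹ is positive definite. -/

import Mathlib

open Matrix

/-! Since `Ḡ + (Ĝ - Φ)⁻¹ = (Ḡ + Ĝ⁻¹) + ((Ĝ - Φ)⁻¹ - Ĝ⁻¹)`, it is enough that inversion strictly
reverses the Loewner order. With `A = Ĝ - Φ`, the Woodbury identity exhibits `A⁻¹ - (A + Φ)⁻¹` as
the congruence transform of the positive definite matrix `(Φ⁻¹ + A⁻¹)⁻¹` by `A⁻¹`. -/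

theorem matrix_inv_sub_inv_add {ι R : Type*} [Fintype ι] [DecidableEq ι] [CommRing R]
    {A B : Matrix ι ι R} (hA : IsUnit A) (hB : IsUnit B) (hAB : IsUnit (B⁻¹ + A⁻¹)) :
    A⁻¹ - (A + B)⁻¹ = A⁻¹ * (B⁻¹ + A⁻¹)⁻¹ * A⁻¹ := by
  have woodbury := add_mul_mul_inv_eq_sub A 1 B 1 hA hB (by simpa only [one_mul, mul_one] using hAB)
  simp only [one_mul, mul_one] at woodbury
  rw [woodbury, sub_sub_cancel]

section PosDef

variable {ι K : Type*} [Fintype ι] [DecidableEq ι]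
  [Field K] [PartialOrder K] [StarRing K] [AddLeftMono K]

theorem posDef_inv_sub_inv_add {A B : Matrix ι ι K} (hA : A.PosDef) (hB : B.PosDef) :
    (A⁻¹ - (A + B)⁻¹).PosDef := by
  have hsum : (B⁻¹ + A⁻¹).PosDef := hB.inv.add hA.inv
  have hcongr : (A⁻¹ * (B⁻¹ + A⁻¹)⁻¹ * (A⁻¹)ᴴ).PosDef :=
    hA.inv.isUnit.posDef_star_right_conjugate_iff.mpr hsum.inv
  rwa [hA.inv.isHermitian.eq, ← matrix_inv_sub_inv_add hA.isUnit hB.isUnit hsum.isUnit] at hcongr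

theorem posDef_inv_sub_inv {A B : Matrix ι ι K} (hA : A.PosDef) (hBA : (B - A).PosDef) :
    (A⁻¹ - B⁻¹).PosDef := by
  simpa only [add_sub_cancel] using posDef_inv_sub_inv_add hA hBA

theorem stmt_6_general {Φ Ghat Gbar : Matrix ι ι K} (hΦ : Φ.PosDef)
    (hdiff : (Ghat - Φ).PosDef) (hsum : (Gbar + Ghat⁻¹).PosSemidef) :
    (Gbar + (Ghat - Φ)⁻¹).PosDef := by
  have hinv : ((Ghat - Φ)⁻¹ - Ghat⁻¹).PosDef :=
    posDef_inv_sub_inv hdiff (by rwa [sub_sub_cancel])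
  rw [← add_add_sub_cancel Gbar (Ghat - Φ)⁻¹ Ghat⁻¹]
  exact hinv.posSemidef_add hsum

end PosDef

/-- Second sufficient condition: if `Φ > 0`, `Ĝ > 0`, `Ĝ - Φ > 0` and
`Ḡ + Ĝ⁻¹ ≥ 0`, then `Ḡ + (Ĝ - Φ)⁻¹ > 0`. -/
theorem stmt_6 (n : ℕ) (Φ Ghat Gbar : Matrix (Fin n) (Fin n) ℝ)
    (hΦ : Φ.PosDef) (hGhat : Ghat.PosDef) (hGbar : Gbar.IsHermitian)
    (hdiff : (Ghat - Φ).PosDef) (hsum : (Gbar + Ghat⁻¹).PosSemidef) :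
    (Gbar + (Ghat - Φ)⁻¹).PosDef :=
  stmt_6_general hΦ hdiff hsum
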